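/- arXiv:2111.02837 — 2 statements merged into one kernel-verified Lean document; each statement's English description precedes it below -/
import Mathlib

section
/- Let g and h be bijections of the Grassmannians of m-dimensional and l-dimensional subspaces of a finite-dimensional complex vector space V with 0 < m < l < dim V, such that X ⊆ Y if and only if g(X) ⊆ h(Y) for all X of dimension m and Y of dimension l. Then there exists a semilinear automorphism S of V inducing both g and h, i.e., g(X) = S(X) and h(Y) = S(Y) for all such X, Y. -/
open Module

section Subspaces

variable {K V : Type*} [Field K] [AddCommGroup V] [Module K V] [FiniteDimensional K V]

theorem Submodule.exists_between_finrank_eq {W U : Submodule K V} (hWU : W ≤ U) {j : ℕ}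
    (hW : finrank K W ≤ j) (hU : j ≤ finrank K U) :
    ∃ Y : Submodule K V, W ≤ Y ∧ Y ≤ U ∧ finrank K Y = j := by
  induction j, hW using Nat.le_induction with
  | base => exact ⟨W, le_rfl, hWU, rfl⟩
  | succ j _ ih =>
    obtain ⟨Y, hWY, hYU, hY⟩ := ih (by omega)
    obtain ⟨x, hxU, hxY⟩ : ∃ x ∈ U, x ∉ Y := by
      by_contra! hUY
      have := Submodule.finrank_mono (R := K) (M := V) (s := U) (t := Y) hUY
      omega
    refine ⟨Y ⊔ K ∙ x, hWY.trans le_sup_left, sup_le hYU (by simpa using hxU), ?_⟩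
    rw [Submodule.finrank_sup_span_singleton hxY, hY]

theorem Submodule.exists_eq_span_singleton_of_finrank_eq_one {X : Submodule K V}
    (hX : finrank K X = 1) : ∃ x : V, x ≠ 0 ∧ X = K ∙ x := by
  have hne : X ≠ ⊥ := by
    rintro rfl
    simp at hX
  obtain ⟨x, hxX, hx⟩ := X.exists_mem_ne_zero_of_ne_bot hne
  refine ⟨x, hx, (Submodule.eq_of_le_of_finrank_eq (by simpa using hxX) ?_).symm⟩
  rw [finrank_span_singleton hx, hX]

/-- A subspace of dimension at most `l < dim V` is the intersection of the `l`-dimensional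
subspaces containing it. -/
theorem Submodule.exists_finrank_eq_notMem {l : ℕ} (hl : l < finrank K V) {W : Submodule K V}
    (hW : finrank K W ≤ l) {z : V} (hz : z ∉ W) :
    ∃ Y : Submodule K V, finrank K Y = l ∧ W ≤ Y ∧ z ∉ Y := by
  obtain ⟨f, hfz, hWf⟩ := Submodule.exists_le_ker_of_notMem hz
  have hker : l ≤ finrank K f.ker := by
    have hsum := f.finrank_range_add_finrank_ker
    have hrange := f.range.finrank_le
    rw [finrank_self] at hrange
    omega
  obtain ⟨Y, hWY, hYf, hY⟩ := Submodule.exists_between_finrank_eq hWf hW hker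
  exact ⟨Y, hY, hWY, fun hzY => hfz (hYf hzY)⟩

/-- Of three pairwise adjacent subspaces not contained in the join of two of them, each contains
the intersection of the other two. -/
theorem Submodule.inf_le_of_finrank_sup_eq {X₁ X₂ X : Submodule K V} {k : ℕ}
    (hX₁ : finrank K X₁ = k) (hX₂ : finrank K X₂ = k) (hX : finrank K X = k)
    (h₁₂ : finrank K ↑(X₁ ⊔ X₂) = k + 1)
    (h₁ : finrank K ↑(X₁ ⊔ X) = k + 1) (h₂ : finrank K ↑(X₂ ⊔ X) = k + 1)
    (hle : ¬ X ≤ X₁ ⊔ X₂) : X₁ ⊓ X₂ ≤ X := by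
  have e₁ := Submodule.finrank_sup_add_finrank_inf_eq X₁ X
  have e₂ := Submodule.finrank_sup_add_finrank_inf_eq X₂ X
  have hlt : finrank K ↑((X₁ ⊔ X₂) ⊓ X) < finrank K X :=
    Submodule.finrank_lt_finrank_of_lt
      (lt_of_le_of_ne inf_le_right fun h => hle (inf_eq_right.mp h))
  have i₁ : X₁ ⊓ X = (X₁ ⊔ X₂) ⊓ X :=
    Submodule.eq_of_le_of_finrank_le (inf_le_inf_right _ le_sup_left) (by omega)
  have i₂ : X₂ ⊓ X = (X₁ ⊔ X₂) ⊓ X :=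
    Submodule.eq_of_le_of_finrank_le (inf_le_inf_right _ le_sup_right) (by omega)
  have hle : X₁ ⊓ X ≤ X₁ ⊓ X₂ := le_inf inf_le_left ((i₁.trans i₂.symm).le.trans inf_le_left)
  have e := Submodule.finrank_sup_add_finrank_inf_eq X₁ X₂
  rw [← Submodule.eq_of_le_of_finrank_le hle (by omega)]
  exact inf_le_right

end Subspaces

section Correspondence

variable {K V : Type*} [Field K] [AddCommGroup V] [Module K V]

/-- `X` and `X'` correspond under a permutation `h` of the `l`-dimensional subspaces if `h` maps
the `l`-dimensional subspaces containing `X` to those containing `X'`. -/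
def GrassmannCorr {l : ℕ} (h : {Y : Submodule K V // finrank K Y = l} ≃
    {Y : Submodule K V // finrank K Y = l}) (X X' : Submodule K V) : Prop :=
  ∀ Y, X ≤ Y.val ↔ X' ≤ (h Y).val

/-- Every `k`-dimensional subspace corresponds under `h` to some `k`-dimensional subspace. -/
def GrassmannLifts {l : ℕ} (h : {Y : Submodule K V // finrank K Y = l} ≃
    {Y : Submodule K V // finrank K Y = l}) (k : ℕ) : Prop :=
  ∀ X : Submodule K V, finrank K X = k →
    ∃ X' : Submodule K V, finrank K X' = k ∧ GrassmannCorr h X X'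

variable {l : ℕ} {h : {Y : Submodule K V // finrank K Y = l} ≃
    {Y : Submodule K V // finrank K Y = l}} {X X' W W' X₁ X₂ X₁' X₂' : Submodule K V}

theorem GrassmannCorr.symm (hX : GrassmannCorr h X X') : GrassmannCorr h.symm X' X := fun Y => by
  simpa using (hX (h.symm Y)).symm

theorem GrassmannCorr.sup (hX : GrassmannCorr h X X') (hW : GrassmannCorr h W W') :
    GrassmannCorr h (X ⊔ W) (X' ⊔ W') := fun Y => by
  rw [sup_le_iff, sup_le_iff, hX Y, hW Y]

variable [FiniteDimensional K V]

theorem GrassmannCorr.finrank_le (hl : l < finrank K V) (hW : GrassmannCorr h W W')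
    (hWl : finrank K W ≤ l) : finrank K W' ≤ l := by
  obtain ⟨Y, hWY, -, hY⟩ :=
    Submodule.exists_between_finrank_eq (le_top : W ≤ ⊤) hWl (by simpa using hl.le)
  exact (Submodule.finrank_mono ((hW ⟨Y, hY⟩).mp hWY)).trans (h ⟨Y, hY⟩).property.le

theorem GrassmannCorr.mono (hl : l < finrank K V) (hX : GrassmannCorr h X X')
    (hW : GrassmannCorr h W W') (hWl : finrank K W ≤ l) (hXW : X ≤ W) : X' ≤ W' := by
  intro z hz
  by_contra hzW
  obtain ⟨Y, hY, hWY, hzY⟩ :=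
    Submodule.exists_finrank_eq_notMem hl (hW.finrank_le hl hWl) hzW
  have hXY := (hX.symm ⟨Y, hY⟩).mpr (hXW.trans ((hW.symm ⟨Y, hY⟩).mp hWY))
  exact hzY (hXY hz)

theorem GrassmannCorr.le_iff (hl : l < finrank K V) (hX : GrassmannCorr h X X')
    (hW : GrassmannCorr h W W') (hWl : finrank K W ≤ l) : X ≤ W ↔ X' ≤ W' :=
  ⟨hX.mono hl hW hWl, hX.symm.mono hl hW.symm (hW.finrank_le hl hWl)⟩

/-- Correspondence preserves adjacency of `k`-dimensional subspaces. -/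
theorem GrassmannCorr.finrank_sup_eq (hl : l < finrank K V) {k : ℕ} (hk : 0 < k) (hkl : k < l)
    (hlift : GrassmannLifts h.symm k)
    (h₁ : GrassmannCorr h X₁ X₁') (h₂ : GrassmannCorr h X₂ X₂')
    (hX₁ : finrank K X₁ = k) (hX₁' : finrank K X₁' = k)
    (hsup : finrank K ↑(X₁ ⊔ X₂) = k + 1) : finrank K ↑(X₁' ⊔ X₂') = k + 1 := by
  have hnle : ¬ X₂' ≤ X₁' := by
    rw [← h₂.le_iff hl h₁ (by omega)]
    intro hle
    rw [sup_eq_left.mpr hle] at hsup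
    omega
  obtain ⟨y, hy₂, hy₁⟩ := Set.not_subset.mp hnle
  have hfin := Submodule.finrank_sup_span_singleton hy₁
  obtain ⟨H, -, hH₁, hH⟩ := Submodule.exists_between_finrank_eq
    (bot_le : ⊥ ≤ X₁') (j := k - 1) (by simp) (by omega)
  have hX' : finrank K ↑(H ⊔ K ∙ y) = k := by
    rw [Submodule.finrank_sup_span_singleton fun hyH => hy₁ (hH₁ hyH)]
    omega
  obtain ⟨X, hX, hcorr⟩ := hlift _ hX'
  replace hcorr : GrassmannCorr h X (H ⊔ K ∙ y) := by simpa using hcorr.symm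
  have hX_le : X ≤ X₁ ⊔ X₂ := by
    rw [hcorr.le_iff hl (h₁.sup h₂) (by omega)]
    exact sup_le_sup hH₁ (by simpa using hy₂)
  have hX_nle : ¬ X ≤ X₁ := by
    rw [hcorr.le_iff hl h₁ (by omega)]
    exact fun hle => hy₁ (hle (Submodule.mem_sup_right (Submodule.mem_span_singleton_self y)))
  have hlt : finrank K X₁ < finrank K ↑(X₁ ⊔ X) :=
    Submodule.finrank_lt_finrank_of_lt (left_lt_sup.mpr hX_nle)
  have heq : X₁ ⊔ X = X₁ ⊔ X₂ :=
    Submodule.eq_of_le_of_finrank_le (sup_le le_sup_left hX_le) (by omega)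
  have hX₂_le : X₂' ≤ X₁' ⊔ (H ⊔ K ∙ y) :=
    h₂.mono hl (h₁.sup hcorr) (by rw [heq]; omega) (heq ▸ le_sup_right)
  have hle : X₁' ⊔ X₂' ≤ X₁' ⊔ K ∙ y :=
    sup_le le_sup_left (hX₂_le.trans (sup_le le_sup_left (sup_le_sup_right hH₁ _)))
  have hub := Submodule.finrank_mono hle
  have hlb : finrank K X₁' < finrank K ↑(X₁' ⊔ X₂') :=
    Submodule.finrank_lt_finrank_of_lt (left_lt_sup.mpr hnle)
  omega

theorem GrassmannCorr.inf_le (hl : l < finrank K V) {k : ℕ} (hkl : k + 1 < l)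
    (hlift : GrassmannLifts h (k + 1)) (hlift' : GrassmannLifts h.symm (k + 1))
    (h₁ : GrassmannCorr h X₁ X₁') (h₂ : GrassmannCorr h X₂ X₂')
    (hX₁ : finrank K X₁ = k + 1) (hX₁' : finrank K X₁' = k + 1)
    (hX₂ : finrank K X₂ = k + 1) (hX₂' : finrank K X₂' = k + 1)
    (hinf : finrank K ↑(X₁ ⊓ X₂) = k) (Y : {Y : Submodule K V // finrank K Y = l})
    (hY : X₁ ⊓ X₂ ≤ Y.val) : X₁' ⊓ X₂' ≤ (h Y).val := by
  have hsup : finrank K ↑(X₁ ⊔ X₂) = k + 1 + 1 := by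
    have := Submodule.finrank_sup_add_finrank_inf_eq X₁ X₂
    omega
  by_cases hle : Y.val ≤ X₁ ⊔ X₂
  · have heq : Y.val = X₁ ⊔ X₂ :=
      Submodule.eq_of_le_of_finrank_le hle (by have := Y.property; omega)
    exact inf_le_left.trans ((h₁ Y).mp (heq ▸ le_sup_left))
  obtain ⟨y, hyY, hy⟩ := Set.not_subset.mp hle
  have hX : finrank K ↑((X₁ ⊓ X₂) ⊔ K ∙ y) = k + 1 := by
    rw [Submodule.finrank_sup_span_singleton fun hyZ => hy (Submodule.mem_sup_left
      (Submodule.mem_inf.mp hyZ).1), hinf]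
  obtain ⟨X', hX', hcorr⟩ := hlift _ hX
  have hXY : X' ≤ (h Y).val := (hcorr Y).mp (sup_le hY (by simpa using hyY))
  refine le_trans ?_ hXY
  have adj : ∀ {U U'}, GrassmannCorr h U U' → finrank K U = k + 1 → finrank K U' = k + 1 →
      X₁ ⊓ X₂ ≤ U → y ∉ U → finrank K ↑(U' ⊔ X') = k + 1 + 1 := by
    intro U U' hUU' hU hU' hle hyU
    refine hUU'.finrank_sup_eq hl (Nat.succ_pos k) hkl hlift' hcorr hU hU' ?_
    rw [← sup_assoc, sup_eq_left.mpr hle, Submodule.finrank_sup_span_singleton hyU, hU]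
  refine Submodule.inf_le_of_finrank_sup_eq hX₁' hX₂' hX'
    (h₁.finrank_sup_eq hl (Nat.succ_pos k) hkl hlift' h₂ hX₁ hX₁' hsup)
    (adj h₁ hX₁ hX₁' inf_le_left fun hy₁ => hy (Submodule.mem_sup_left hy₁))
    (adj h₂ hX₂ hX₂' inf_le_right fun hy₂ => hy (Submodule.mem_sup_right hy₂)) ?_
  rw [← hcorr.le_iff hl (h₁.sup h₂) (by omega)]
  exact fun hle => hy (hle (Submodule.mem_sup_right (Submodule.mem_span_singleton_self y)))

theorem GrassmannLifts.of_succ (hl : l < finrank K V) {k : ℕ} (hkl : k + 1 < l)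
    (hlift : GrassmannLifts h (k + 1)) (hlift' : GrassmannLifts h.symm (k + 1)) :
    GrassmannLifts h k := by
  intro Z hZ
  obtain ⟨X₁, hZ₁, -, hX₁⟩ := Submodule.exists_between_finrank_eq (le_top : Z ≤ ⊤)
    (j := k + 1) (by omega) (by rw [finrank_top]; omega)
  obtain ⟨x, hx⟩ : ∃ x, x ∉ X₁ := by
    by_contra! hall
    rw [(Submodule.eq_top_iff' (p := X₁)).mpr hall, finrank_top] at hX₁
    omega
  have hX₂ : finrank K ↑(Z ⊔ K ∙ x) = k + 1 := by
    rw [Submodule.finrank_sup_span_singleton fun hxZ => hx (hZ₁ hxZ), hZ]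
  have hsup : finrank K ↑(X₁ ⊔ (Z ⊔ K ∙ x)) = k + 1 + 1 := by
    rw [← sup_assoc, sup_eq_left.mpr hZ₁, Submodule.finrank_sup_span_singleton hx, hX₁]
  have hdim := Submodule.finrank_sup_add_finrank_inf_eq X₁ (Z ⊔ K ∙ x)
  have hinf : Z = X₁ ⊓ (Z ⊔ K ∙ x) :=
    Submodule.eq_of_le_of_finrank_le (le_inf hZ₁ le_sup_left) (by omega)
  generalize Z ⊔ K ∙ x = X₂ at *
  obtain ⟨X₁', hX₁', h₁⟩ := hlift X₁ hX₁
  obtain ⟨X₂', hX₂', h₂⟩ := hlift X₂ hX₂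
  have hsup' := h₁.finrank_sup_eq hl (Nat.succ_pos k) hkl hlift' h₂ hX₁ hX₁' hsup
  have hdim' := Submodule.finrank_sup_add_finrank_inf_eq X₁' X₂'
  have hinf' : finrank K ↑(X₁' ⊓ X₂') = k := by omega
  subst hinf
  refine ⟨X₁' ⊓ X₂', hinf', fun Y => ⟨fun hY => ?_, fun hY => ?_⟩⟩
  · exact h₁.inf_le hl hkl hlift hlift' h₂ hX₁ hX₁' hX₂ hX₂' hZ Y hY
  · simpa using h₁.symm.inf_le hl hkl hlift' (by simpa using hlift) h₂.symm hX₁' hX₁ hX₂' hX₂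
      hinf' (h Y) hY

theorem GrassmannLifts.one (hl : l < finrank K V) {k : ℕ} (hkl : k + 1 < l)
    (hlift : GrassmannLifts h (k + 1)) (hlift' : GrassmannLifts h.symm (k + 1)) :
    GrassmannLifts h 1 ∧ GrassmannLifts h.symm 1 := by
  induction k with
  | zero => exact ⟨hlift, hlift'⟩
  | succ k ih =>
    exact ih (by omega) (hlift.of_succ hl hkl hlift')
      (hlift'.of_succ hl hkl (by simpa using hlift))

end Correspondence

section FundamentalTheorem

variable {K V : Type*} [Field K] [AddCommGroup V] [Module K V]

theorem coeff_eq_zero_of_notMem_span_singleton {x y : V} (hx : x ≠ 0)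
    (hy : y ∉ Submodule.span K {x}) {a b : K}
    (hab : a • x + b • y = 0) : a = 0 ∧ b = 0 := by
  have hb : b = 0 := by
    by_contra hb
    refine hy (Submodule.mem_span_singleton.mpr ⟨-(b⁻¹ * a), ?_⟩)
    linear_combination (norm := module) (-b⁻¹) • hab + (inv_mul_cancel₀ hb) • y
  subst hb
  simpa [hx] using hab

theorem coeff_eq_zero_of_notMem_span_pair {x y z : V} (hx : x ≠ 0)
    (hy : y ∉ Submodule.span K {x}) (hz : z ∉ Submodule.span K {x, y}) {a b c : K}
    (habc : a • x + b • y + c • z = 0) : a = 0 ∧ b = 0 ∧ c = 0 := by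
  have hc : c = 0 := by
    by_contra hc
    refine hz (Submodule.mem_span_pair.mpr ⟨-(c⁻¹ * a), -(c⁻¹ * b), ?_⟩)
    linear_combination (norm := module) (-c⁻¹) • habc + (inv_mul_cancel₀ hc) • z
  subst hc
  obtain ⟨ha, hb⟩ := coeff_eq_zero_of_notMem_span_singleton (a := a) (b := b) hx hy
    (by simpa using habc)
  exact ⟨ha, hb, rfl⟩

variable (K) in
/-- A collineation of the projective space of `V`, as a relation between representing vectors. -/
structure IsCollineationRel (R : V → V → Prop) : Prop where
  ne_zero_left : ∀ {x y}, R x y → x ≠ 0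
  ne_zero_right : ∀ {x y}, R x y → y ≠ 0
  exists_right : ∀ {x}, x ≠ 0 → ∃ y, R x y
  exists_left : ∀ {y}, y ≠ 0 → ∃ x, R x y
  mem_span_pair_iff : ∀ {x x' y y' z z'}, R x x' → R y y' → R z z' →
    (z ∈ Submodule.span K {x, y} ↔ z' ∈ Submodule.span K {x', y'})
  smul_left : ∀ {x y} {a : K}, a ≠ 0 → R x y → R (a • x) y
  smul_right : ∀ {x y} {a : K}, a ≠ 0 → R x y → R x (a • y)

/-- `T` represents the collineation `R` on the hyperplane `ker f`, with the scalars chosen so that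
`e' + T w` represents the image of `e + w`. -/
structure IsNormalizedLift (R : V → V → Prop) (f : V →ₗ[K] K) (e e' : V) (T : V → V) : Prop where
  map_zero : T 0 = 0
  rel : ∀ {w}, f w = 0 → w ≠ 0 → R w (T w)
  rel_add : ∀ {w}, f w = 0 → R (e + w) (e' + T w)

variable {R : V → V → Prop} {f : V →ₗ[K] K} {e e' : V} {T : V → V}

namespace IsCollineationRel

theorem mem_span_singleton_iff (hR : IsCollineationRel K R) {x x' z z' : V} (hx : R x x')
    (hz : R z z') : z ∈ Submodule.span K {x} ↔ z' ∈ Submodule.span K {x'} := by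
  simpa using hR.mem_span_pair_iff hx hx hz

theorem exists_smul_eq (hR : IsCollineationRel K R) {x y z : V} (hy : R x y) (hz : R x z) :
    ∃ c : K, c ≠ 0 ∧ c • y = z := by
  obtain ⟨c, hc⟩ := Submodule.mem_span_singleton.mp
    ((hR.mem_span_singleton_iff hy hz).mp (Submodule.mem_span_singleton_self x))
  refine ⟨c, ?_, hc⟩
  rintro rfl
  exact hR.ne_zero_right hz (by simpa using hc.symm)

theorem exists_normalizedLift (hR : IsCollineationRel K R) (he : R e e') (hf : f e = 1) :
    ∃ T, IsNormalizedLift R f e e' T := by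
  have key : ∀ w, ∃ t, (w = 0 → t = 0) ∧ (f w = 0 → w ≠ 0 → R w t) ∧
      (f w = 0 → R (e + w) (e' + t)) := by
    intro w
    by_cases hw : w = 0
    · exact ⟨0, by simp, by simp [hw], by simpa [hw] using he⟩
    by_cases hfw : f w = 0
    swap
    · exact ⟨0, by simp, by simp [hfw], by simp [hfw]⟩
    have hew : e + w ≠ 0 := by
      intro h
      simpa [hf, hfw] using congrArg f h
    obtain ⟨w', hw'⟩ := hR.exists_right hw
    obtain ⟨p, hp⟩ := hR.exists_right hew
    obtain ⟨a, b, hab⟩ := Submodule.mem_span_pair.mp ((hR.mem_span_pair_iff he hw' hp).mp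
      (Submodule.mem_span_pair.mpr ⟨1, 1, by simp⟩))
    have ha : a ≠ 0 := by
      rintro rfl
      have hmem := (hR.mem_span_singleton_iff hw' hp).mpr
        (Submodule.mem_span_singleton.mpr ⟨b, by simpa using hab⟩)
      obtain ⟨c, hc⟩ := Submodule.mem_span_singleton.mp hmem
      simpa [hf, hfw] using congrArg f hc
    have hb : b ≠ 0 := by
      rintro rfl
      have hmem := (hR.mem_span_singleton_iff he hp).mpr
        (Submodule.mem_span_singleton.mpr ⟨a, by simpa using hab⟩)
      obtain ⟨c, hc⟩ := Submodule.mem_span_singleton.mp hmem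
      have hc1 : c = 1 := by simpa [hf, hfw] using congrArg f hc
      exact hw (by simpa [hc1] using hc)
    refine ⟨(a⁻¹ * b) • w', fun h => absurd h hw,
      fun _ _ => hR.smul_right (mul_ne_zero (inv_ne_zero ha) hb) hw', fun _ => ?_⟩
    have := hR.smul_right (inv_ne_zero ha) hp
    rwa [← hab, smul_add, smul_smul, smul_smul, inv_mul_cancel₀ ha, one_smul] at this
  choose T h0 h1 h2 using key
  exact ⟨T, h0 0 rfl, fun {w} => h1 w, fun {w} => h2 w⟩

end IsCollineationRel

namespace IsNormalizedLift

theorem notMem_span_singleton (hR : IsCollineationRel K R) (hT : IsNormalizedLift R f e e' T)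
    (he : R e e') (hf : f e = 1) {w : V} (hw : f w = 0) (hw0 : w ≠ 0) :
    T w ∉ Submodule.span K {e'} := by
  rw [← hR.mem_span_singleton_iff he (hT.rel hw hw0), Submodule.mem_span_singleton]
  rintro ⟨c, rfl⟩
  have hc : c = 0 := by simpa [hf] using hw
  simp [hc] at hw0

theorem notMem_span_pair (hR : IsCollineationRel K R) (hT : IsNormalizedLift R f e e' T)
    (he : R e e') (hf : f e = 1) {u v : V} (hu : f u = 0) (hv : f v = 0) (hu0 : u ≠ 0)
    (huv : v ∉ Submodule.span K {u}) : T v ∉ Submodule.span K {e', T u} := by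
  have hv0 : v ≠ 0 := fun h => huv (h ▸ Submodule.zero_mem _)
  rw [← hR.mem_span_pair_iff he (hT.rel hu hu0) (hT.rel hv hv0), Submodule.mem_span_pair]
  rintro ⟨a, b, rfl⟩
  have ha : a = 0 := by simpa [hf, hu] using hv
  exact huv (Submodule.mem_span_singleton.mpr ⟨b, by simp [ha]⟩)

theorem eq_of_rel (hR : IsCollineationRel K R) (hT : IsNormalizedLift R f e e' T)
    (he : R e e') (hf : f e = 1) {w t : V} (hw : f w = 0) (hw0 : w ≠ 0) (ht : R w t)
    (het : R (e + w) (e' + t)) : T w = t := by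
  obtain ⟨c, -, rfl⟩ := hR.exists_smul_eq (hT.rel hw hw0) ht
  obtain ⟨d, -, hd⟩ := hR.exists_smul_eq (hT.rel_add hw) het
  obtain ⟨h1, h2⟩ := coeff_eq_zero_of_notMem_span_singleton (a := d - 1) (b := d - c)
    (hR.ne_zero_right he) (hT.notMem_span_singleton hR he hf hw hw0)
    (by linear_combination (norm := module) hd)
  have hc : c = 1 := by linear_combination h1 - h2
  rw [hc, one_smul]

theorem map_add_of_notMem (hR : IsCollineationRel K R) (hT : IsNormalizedLift R f e e' T)
    (he : R e e') (hf : f e = 1) {u v : V} (hu : f u = 0) (hv : f v = 0)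
    (huv : v ∉ Submodule.span K {u}) : T (u + v) = T u + T v := by
  by_cases hu0 : u = 0
  · simp [hu0, hT.map_zero]
  have hv0 : v ≠ 0 := fun h => huv (h ▸ Submodule.zero_mem _)
  have hs0 : u + v ≠ 0 := fun h =>
    huv (Submodule.mem_span_singleton.mpr ⟨-1, by rw [neg_one_smul, neg_eq_of_add_eq_zero_right h]⟩)
  have hes0 : e + (u + v) ≠ 0 := by
    intro h
    simpa [hf, hu, hv] using congrArg f h
  have ind {a b c : K} (habc : a • e' + b • T u + c • T v = 0) : a = 0 ∧ b = 0 ∧ c = 0 :=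
    coeff_eq_zero_of_notMem_span_pair (hR.ne_zero_right he)
      (hT.notMem_span_singleton hR he hf hu hu0) (hT.notMem_span_pair hR he hf hu hv hu0 huv) habc
  obtain ⟨p, hp⟩ := hR.exists_right hes0
  obtain ⟨a, b, hab⟩ := Submodule.mem_span_pair.mp
    ((hR.mem_span_pair_iff (hT.rel_add hu) (hT.rel hv hv0) hp).mp
      (Submodule.mem_span_pair.mpr ⟨1, 1, by module⟩))
  obtain ⟨c, d, hcd⟩ := Submodule.mem_span_pair.mp
    ((hR.mem_span_pair_iff (hT.rel_add hv) (hT.rel hu hu0) hp).mp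
      (Submodule.mem_span_pair.mpr ⟨1, 1, by module⟩))
  obtain ⟨h1, h2, h3⟩ := ind (a := a - c) (b := a - d) (c := b - c)
    (by linear_combination (norm := module) hab - hcd)
  have hp_eq : p = a • (e' + (T u + T v)) := by
    linear_combination (norm := module) (h3 + -h1) • T v - hab
  have ha : a ≠ 0 := by
    rintro rfl
    exact hR.ne_zero_right hp (by simpa using hp_eq)
  have hes : R (e + (u + v)) (e' + (T u + T v)) := by
    have := hR.smul_right (inv_ne_zero ha) hp
    rwa [hp_eq, inv_smul_smul₀ ha] at this
  obtain ⟨q, hq⟩ := hR.exists_right hs0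
  obtain ⟨a', b', hab'⟩ := Submodule.mem_span_pair.mp
    ((hR.mem_span_pair_iff (hT.rel hu hu0) (hT.rel hv hv0) hq).mp
      (Submodule.mem_span_pair.mpr ⟨1, 1, by module⟩))
  obtain ⟨c', d', hcd'⟩ := Submodule.mem_span_pair.mp
    ((hR.mem_span_pair_iff he hes hq).mp
      (Submodule.mem_span_pair.mpr ⟨-1, 1, by module⟩))
  obtain ⟨-, k2, k3⟩ := ind (a := -c' - d') (b := a' - d') (c := b' - d')
    (by linear_combination (norm := module) hab' - hcd')
  have hq_eq : q = a' • (T u + T v) := by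
    linear_combination (norm := module) (k3 - k2) • T v - hab'
  have ha' : a' ≠ 0 := by
    rintro rfl
    exact hR.ne_zero_right hq (by simpa using hq_eq)
  have hs : R (u + v) (T u + T v) := by
    have := hR.smul_right (inv_ne_zero ha') hq
    rwa [hq_eq, inv_smul_smul₀ ha'] at this
  exact hT.eq_of_rel hR he hf (by simp [hu, hv]) hs0 hs hes

theorem map_add (hR : IsCollineationRel K R) (hT : IsNormalizedLift R f e e' T)
    (he : R e e') (hf : f e = 1) (hker : ∀ u, ∃ w, f w = 0 ∧ w ∉ Submodule.span K {u})
    {u v : V} (hu : f u = 0) (hv : f v = 0) : T (u + v) = T u + T v := by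
  by_cases huv : v ∈ Submodule.span K {u}
  swap
  · exact hT.map_add_of_notMem hR he hf hu hv huv
  obtain ⟨w, hw, hwu⟩ := hker u
  have hwv {s : V} (hs : s ∈ Submodule.span K {u}) : w ∉ Submodule.span K {s} := fun h =>
    hwu ((Submodule.span_singleton_le_iff_mem s _).mpr hs h)
  have hsum : u + v ∈ Submodule.span K {u} :=
    add_mem (Submodule.mem_span_singleton_self u) huv
  have h1 := hT.map_add_of_notMem hR he hf (by simp [hu, hv]) hw (hwv hsum)
  have h2 := hT.map_add_of_notMem hR he hf hv hw (hwv huv)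
  have h3 := hT.map_add_of_notMem hR he hf hu (v := v + w) (by simp [hv, hw])
    (fun h => hwu (by simpa using sub_mem h huv))
  rw [← add_assoc, h1, h2, ← add_assoc] at h3
  exact add_right_cancel h3

theorem exists_map_smul (hR : IsCollineationRel K R) (hT : IsNormalizedLift R f e e' T)
    {w : V} (hw : f w = 0) (a : K) : ∃ r : K, T (a • w) = r • T w := by
  by_cases haw : a • w = 0
  · exact ⟨0, by simp [haw, hT.map_zero]⟩
  have hw0 : w ≠ 0 := fun h => haw (by simp [h])
  obtain ⟨r, hr⟩ := Submodule.mem_span_singleton.mp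
    ((hR.mem_span_singleton_iff (hT.rel hw hw0) (hT.rel (w := a • w) (by simp [hw]) haw)).mp
      (Submodule.mem_span_singleton.mpr ⟨a, rfl⟩))
  exact ⟨r, hr.symm⟩

theorem map_smul_of_notMem (hR : IsCollineationRel K R) (hT : IsNormalizedLift R f e e' T)
    (he : R e e') (hf : f e = 1) (hker : ∀ u, ∃ w, f w = 0 ∧ w ∉ Submodule.span K {u})
    {u w : V} (hu : f u = 0) (hw : f w = 0) (hu0 : u ≠ 0) (huw : w ∉ Submodule.span K {u})
    {a r : K} (har : T (a • u) = r • T u) : T (a • w) = r • T w := by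
  have hw0 : w ≠ 0 := fun h => huw (h ▸ Submodule.zero_mem _)
  obtain ⟨s, hs⟩ := hT.exists_map_smul hR hw a
  obtain ⟨t, ht⟩ := hT.exists_map_smul hR (w := u + w) (by simp [hu, hw]) a
  rw [smul_add, hT.map_add hR he hf hker (by simp [hu]) (by simp [hw]),
    hT.map_add hR he hf hker hu hw, har, hs] at ht
  have hmem := mt (hR.mem_span_singleton_iff (hT.rel hu hu0) (hT.rel hw hw0)).mpr huw
  obtain ⟨h1, h2⟩ := coeff_eq_zero_of_notMem_span_singleton (a := r - t) (b := s - t)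
    (hR.ne_zero_right (hT.rel hu hu0)) hmem (by linear_combination (norm := module) ht)
  rw [hs]
  linear_combination (norm := module) (h2 - h1) • T w

/-- A normalized lift is semilinear on the hyperplane. -/
theorem exists_ringEquiv (hR : IsCollineationRel K R) (hT : IsNormalizedLift R f e e' T)
    (he : R e e') (hf : f e = 1) (hker : ∀ u, ∃ w, f w = 0 ∧ w ∉ Submodule.span K {u}) :
    ∃ σ : K ≃+* K, ∀ (a : K) {w : V}, f w = 0 → T (a • w) = σ a • T w := by
  obtain ⟨u, hu, hu0⟩ := hker 0
  replace hu0 : u ≠ 0 := by simpa using hu0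
  have hTu : T u ≠ 0 := hR.ne_zero_right (hT.rel hu hu0)
  choose σ hσ using fun a : K => hT.exists_map_smul hR hu a
  have hsmul (a : K) {w : V} (hw : f w = 0) : T (a • w) = σ a • T w := by
    by_cases hw0 : w = 0
    · simp [hw0, hT.map_zero]
    by_cases huw : w ∈ Submodule.span K {u}
    swap
    · exact hT.map_smul_of_notMem hR he hf hker hu hw hu0 huw (hσ a)
    obtain ⟨v, hv, huv⟩ := hker u
    have hv0 : v ≠ 0 := fun h => huv (h ▸ Submodule.zero_mem _)
    refine hT.map_smul_of_notMem hR he hf hker hv hw hv0 ?_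
      (hT.map_smul_of_notMem hR he hf hker hu hv hu0 huv (hσ a))
    intro hwv
    obtain ⟨c, rfl⟩ := Submodule.mem_span_singleton.mp hwv
    have hc : c ≠ 0 := fun h => hw0 (by simp [h])
    exact huv ((Submodule.smul_mem_iff _ hc).mp huw)
  have hcancel {a b : K} (hab : a • T u = b • T u) : a = b := smul_left_injective K hTu hab
  let φ : K →+* K :=
    { toFun := σ
      map_one' := hcancel (by rw [← hσ, one_smul, one_smul])
      map_zero' := hcancel (by rw [← hσ, zero_smul, zero_smul, hT.map_zero])
      map_mul' := fun a b => hcancel (by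
        rw [← hσ, mul_smul, hsmul a (w := b • u) (by simp [hu]), hσ b, smul_smul])
      map_add' := fun a b => hcancel (by
        rw [← hσ, add_smul, hT.map_add hR he hf hker (by simp [hu]) (by simp [hu]), hσ, hσ,
          add_smul]) }
  have hsurj : Function.Surjective φ := by
    intro b
    have hTu_mem := hT.notMem_span_singleton hR he hf hu hu0
    have hy : e' + b • T u ≠ 0 := fun h => one_ne_zero
      (coeff_eq_zero_of_notMem_span_singleton (a := 1) (hR.ne_zero_right he) hTu_mem
        (by simpa using h)).1
    obtain ⟨x, hx⟩ := hR.exists_left hy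
    obtain ⟨α, β, rfl⟩ := Submodule.mem_span_pair.mp
      ((hR.mem_span_pair_iff he (hT.rel hu hu0) hx).mpr
        (Submodule.mem_span_pair.mpr ⟨1, b, by rw [one_smul]⟩))
    have hα : α ≠ 0 := by
      rintro rfl
      obtain ⟨c, hc⟩ := Submodule.mem_span_singleton.mp
        ((hR.mem_span_singleton_iff (hT.rel hu hu0) hx).mp
          (Submodule.mem_span_singleton.mpr ⟨β, by simp⟩))
      exact one_ne_zero (coeff_eq_zero_of_notMem_span_singleton (a := 1) (b := b - c)
        (hR.ne_zero_right he) hTu_mem (by linear_combination (norm := module) -hc)).1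
    have hx' := hR.smul_left (inv_ne_zero hα) hx
    rw [smul_add, inv_smul_smul₀ hα, smul_smul] at hx'
    have hrel := hT.rel_add (w := (α⁻¹ * β) • u) (by simp [hu])
    obtain ⟨d, -, hd⟩ := hR.exists_smul_eq hrel hx'
    rw [hσ] at hd
    obtain ⟨h1, h2⟩ := coeff_eq_zero_of_notMem_span_singleton (a := d - 1)
      (b := d * σ (α⁻¹ * β) - b) (hR.ne_zero_right he) hTu_mem
      (by linear_combination (norm := module) hd)
    exact ⟨α⁻¹ * β, show σ (α⁻¹ * β) = b by linear_combination h2 - σ (α⁻¹ * β) * h1⟩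
  exact ⟨RingEquiv.ofBijective φ ⟨φ.injective, hsurj⟩, hsmul⟩

end IsNormalizedLift

/-- The fundamental theorem of projective geometry: a collineation of a projective space of
dimension at least two is induced by a semilinear automorphism. -/
theorem IsCollineationRel.exists_semilinear [FiniteDimensional K V] (hV : 3 ≤ finrank K V)
    (hR : IsCollineationRel K R) :
    ∃ (σ : K ≃+* K) (S : V → V), Function.Bijective S ∧
      (∀ x y : V, S (x + y) = S x + S y) ∧ (∀ (a : K) (x : V), S (a • x) = σ a • S x) ∧
      ∀ x : V, x ≠ 0 → R x (S x) := by
  have : Nontrivial V := Module.nontrivial_of_finrank_pos (R := K) (by omega)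
  obtain ⟨e, he0⟩ := exists_ne (0 : V)
  obtain ⟨e', he⟩ := hR.exists_right he0
  obtain ⟨f, hf⟩ := Projective.exists_dual_eq_one K he0
  have hker : ∀ u, ∃ w, f w = 0 ∧ w ∉ Submodule.span K {u} := by
    intro u
    by_contra! hall
    have hle : LinearMap.ker f ≤ Submodule.span K {u} := fun w hw => hall w hw
    have h1 := Submodule.finrank_mono hle
    have h2 : finrank K (Submodule.span K {u}) ≤ 1 := (finrank_span_le_card {u}).trans (by simp)
    have h3 := LinearMap.finrank_range_add_finrank_ker f
    have h4 := (LinearMap.range f).finrank_le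
    rw [finrank_self] at h4
    omega
  obtain ⟨T, hT⟩ := hR.exists_normalizedLift he hf
  obtain ⟨σ, hσ⟩ := hT.exists_ringEquiv hR he hf hker
  have hproj (x : V) : f (x - f x • e) = 0 := by simp [hf]
  let S : V → V := fun x => σ (f x) • e' + T (x - f x • e)
  have hadd (x y : V) : S (x + y) = S x + S y := by
    have hxy : x + y - f (x + y) • e = (x - f x • e) + (y - f y • e) := by
      rw [_root_.map_add]; module
    simp only [S]
    rw [hxy, hT.map_add hR he hf hker (hproj x) (hproj y), _root_.map_add, _root_.map_add]
    module
  have hsmul (a : K) (x : V) : S (a • x) = σ a • S x := by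
    have hax : a • x - f (a • x) • e = a • (x - f x • e) := by
      rw [_root_.map_smul, smul_eq_mul]; module
    simp only [S]
    rw [hax, hσ a (hproj x), _root_.map_smul, smul_eq_mul, _root_.map_mul]
    module
  have hrel (x : V) (hx : x ≠ 0) : R x (S x) := by
    by_cases hfx : f x = 0
    · simpa [S, hfx] using hT.rel hfx hx
    have hrel1 := hT.rel_add (w := (f x)⁻¹ • (x - f x • e))
      (by rw [_root_.map_smul, hproj, smul_zero])
    rw [hσ _ (hproj x)] at hrel1
    have hrel2 := hR.smul_left hfx (hR.smul_right ((map_ne_zero σ).mpr hfx) hrel1)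
    have hx1 : f x • (e + (f x)⁻¹ • (x - f x • e)) = x := by
      rw [smul_add, smul_inv_smul₀ hfx]; module
    have hx2 : σ (f x) • (e' + σ (f x)⁻¹ • T (x - f x • e)) = S x := by
      rw [map_inv₀, smul_add, smul_inv_smul₀ ((map_ne_zero σ).mpr hfx)]
    rwa [hx1, hx2] at hrel2
  refine ⟨σ, S, ⟨fun x y hxy => ?_, fun y => ?_⟩, hadd, hsmul, hrel⟩
  · by_contra hne
    refine hR.ne_zero_right (hrel (x - y) (sub_ne_zero.mpr hne)) ?_
    have := hadd (x - y) y
    rw [sub_add_cancel, hxy] at this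
    exact left_eq_add.mp (by rwa [add_comm] at this)
  · by_cases hy : y = 0
    · exact ⟨0, by simp [S, hT.map_zero, hy]⟩
    obtain ⟨x, hx⟩ := hR.exists_left hy
    obtain ⟨c, -, hc⟩ := hR.exists_smul_eq (hrel x (hR.ne_zero_left hx)) hx
    exact ⟨σ.symm c • x, by rw [hsmul, σ.apply_symm_apply, hc]⟩

end FundamentalTheorem

/-- If `h` lifts to points in both directions, it induces a collineation. -/
theorem GrassmannLifts.isCollineationRel {K V : Type*} [Field K] [AddCommGroup V] [Module K V]
    [FiniteDimensional K V] {l : ℕ} (hl2 : 2 ≤ l) (hl : l < finrank K V)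
    {h : {Y : Submodule K V // finrank K Y = l} ≃ {Y : Submodule K V // finrank K Y = l}}
    (hlift : GrassmannLifts h 1) (hlift' : GrassmannLifts h.symm 1) :
    IsCollineationRel K fun x y : V => x ≠ 0 ∧ y ≠ 0 ∧ GrassmannCorr h (K ∙ x) (K ∙ y) where
  ne_zero_left := fun hxy => hxy.1
  ne_zero_right := fun hxy => hxy.2.1
  exists_right := fun {x} hx => by
    obtain ⟨X', hX', hcorr⟩ := hlift _ (finrank_span_singleton hx)
    obtain ⟨y, hy, rfl⟩ := Submodule.exists_eq_span_singleton_of_finrank_eq_one hX'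
    exact ⟨y, hx, hy, hcorr⟩
  exists_left := fun {y} hy => by
    obtain ⟨X, hX, hcorr⟩ := hlift' _ (finrank_span_singleton hy)
    obtain ⟨x, hx, rfl⟩ := Submodule.exists_eq_span_singleton_of_finrank_eq_one hX
    exact ⟨x, hx, hy, by simpa using hcorr.symm⟩
  smul_left := fun {x y a} ha ⟨hx, hy, hcorr⟩ =>
    ⟨smul_ne_zero ha hx, hy, by rwa [Submodule.span_singleton_smul_eq ha.isUnit]⟩
  smul_right := fun {x y a} ha ⟨hx, hy, hcorr⟩ =>
    ⟨hx, smul_ne_zero ha hy, by rwa [Submodule.span_singleton_smul_eq ha.isUnit]⟩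
  mem_span_pair_iff := fun {x x' y y' z z'} hx hy hz => by
    rw [← Submodule.span_singleton_le_iff_mem, ← Submodule.span_singleton_le_iff_mem,
      Submodule.span_insert, Submodule.span_insert]
    refine hz.2.2.le_iff hl (hx.2.2.sup hy.2.2)
      ((Submodule.finrank_add_le_finrank_add_finrank _ _).trans ?_)
    rw [finrank_span_singleton hx.1, finrank_span_singleton hy.1]
    exact hl2

/-- (Proposition on pairs of Grassmannians.) Let `V` be a finite-dimensional complex
vector space, `0 < m < l < dim V`, and let `g`, `h` be bijections of the Grassmannians
of `m`- and `l`-dimensional subspaces such that `X ⊆ Y ↔ g X ⊆ h Y`. Then `g` and `h`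
are induced by one and the same semilinear automorphism `S` of `V`. -/
theorem stmt_13 {V : Type*} [AddCommGroup V] [Module ℂ V] [FiniteDimensional ℂ V]
    (m l : ℕ) (hm : 0 < m) (hml : m < l) (hl : l < Module.finrank ℂ V)
    (g : {X : Submodule ℂ V // Module.finrank ℂ X = m} ≃
         {X : Submodule ℂ V // Module.finrank ℂ X = m})
    (h : {Y : Submodule ℂ V // Module.finrank ℂ Y = l} ≃
         {Y : Submodule ℂ V // Module.finrank ℂ Y = l})
    (hgh : ∀ (X : {X : Submodule ℂ V // Module.finrank ℂ X = m})
             (Y : {Y : Submodule ℂ V // Module.finrank ℂ Y = l}),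
        X.val ≤ Y.val ↔ (g X).val ≤ (h Y).val) :
    ∃ (α : ℂ ≃+* ℂ) (S : V → V), Function.Bijective S ∧
      (∀ x y : V, S (x + y) = S x + S y) ∧
      (∀ (a : ℂ) (x : V), S (a • x) = α a • S x) ∧
      (∀ X : {X : Submodule ℂ V // Module.finrank ℂ X = m},
        ((g X).val : Set V) = S '' (X.val : Set V)) ∧
      (∀ Y : {Y : Submodule ℂ V // Module.finrank ℂ Y = l},
        ((h Y).val : Set V) = S '' (Y.val : Set V)) := by
  have hg (X) : GrassmannCorr h X.val (g X).val := hgh X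
  have hlift : GrassmannLifts h m := fun X hX => ⟨_, (g ⟨X, hX⟩).property, hg ⟨X, hX⟩⟩
  have hlift' : GrassmannLifts h.symm m := fun X hX =>
    ⟨_, (g.symm ⟨X, hX⟩).property, by simpa using (hg (g.symm ⟨X, hX⟩)).symm⟩
  obtain ⟨k, rfl⟩ : ∃ k, m = k + 1 := ⟨m - 1, by omega⟩
  obtain ⟨hpt, hpt'⟩ := hlift.one hl hml hlift'
  obtain ⟨α, S, hbij, hadd, hsmul, hS⟩ :=
    (hpt.isCollineationRel (by omega) hl hpt').exists_semilinear (by omega)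
  have hS0 : S 0 = 0 := by simpa using hadd 0 0
  have himage {X X' : Submodule ℂ V} (hX : GrassmannCorr h X X')
      (hXl : Module.finrank ℂ X ≤ l) : (X' : Set V) = S '' (X : Set V) := by
    have hmem (x : V) : x ∈ X ↔ S x ∈ X' := by
      by_cases hx : x = 0
      · simp [hx, hS0]
      simpa using (hS x hx).2.2.le_iff hl hX hXl
    ext y
    obtain ⟨x, rfl⟩ := hbij.surjective y
    simp [hbij.injective.mem_set_image, hmem]
  refine ⟨α, S, hbij, hadd, hsmul, fun X => himage (hg X) (X.property.trans_le hml.le),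
    fun Y => himage (fun Z => ?_) Y.property.le⟩
  refine ⟨fun hle => ?_, fun hle => ?_⟩
  · rw [Subtype.ext (Submodule.eq_of_le_of_finrank_eq hle (Y.property.trans Z.property.symm))]
  · rw [h.injective (Subtype.ext (Submodule.eq_of_le_of_finrank_eq hle
      ((h Y).property.trans (h Z).property.symm)))]
end

section
/- Let V be a finite-dimensional complex inner product space, X₁, X₂, X₃ pairwise orthogonal subspaces with dim Xᵢ = nᵢ ≥ 1. Then there exist subspaces Y₁, Y₂, Y₃ of V with dim Yᵢ = nᵢ, pairwise orthogonal, with Y₁ + Y₂ + Y₃ = X₁ + X₂ + X₃, such that Yᵢ is adjacent to Xᵢ for i = 1, 3, and X₁ is not orthogonal to Y₃. -/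
open Submodule in
/-- Replacing the line `L` of `X` by a line `M` orthogonal to `X` preserves the dimension. -/
lemma finrank_exchange_line {V : Type*} [NormedAddCommGroup V] [InnerProductSpace ℂ V]
    [FiniteDimensional ℂ V] {X L M : Submodule ℂ V} (hLX : L ≤ X) (hMX : M ⟂ X)
    (hL : Module.finrank ℂ L = 1) (hM : Module.finrank ℂ M = 1) :
    Module.finrank ℂ ↥(Lᗮ ⊓ X ⊔ M) = Module.finrank ℂ X := by
  have hsum := finrank_sup_add_finrank_inf_eq (Lᗮ ⊓ X) M
  have hdisj : Lᗮ ⊓ X ⊓ M = ⊥ := (hMX.mono_right inf_le_right).symm.disjoint.eq_bot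
  rw [hdisj, finrank_bot] at hsum
  have := finrank_add_inf_finrank_orthogonal hLX
  omega

open Submodule in
/-- Replacing the line `L` of `X` by a line orthogonal to `X` gives a subspace
adjacent to `X`. -/
lemma finrank_exchange_line_inf {V : Type*} [NormedAddCommGroup V] [InnerProductSpace ℂ V]
    [FiniteDimensional ℂ V] {X L M : Submodule ℂ V} (hLX : L ≤ X) (hMX : M ⟂ X)
    (hL : Module.finrank ℂ L = 1) :
    Module.finrank ℂ ↥((Lᗮ ⊓ X ⊔ M) ⊓ X) + 1 = Module.finrank ℂ X := by
  rw [sup_inf_assoc_of_le M (inf_le_right : Lᗮ ⊓ X ≤ X), hMX.disjoint.eq_bot, sup_bot_eq]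
  have := finrank_add_inf_finrank_orthogonal hLX
  omega

/-- A nonzero finite-dimensional subspace contains a line. -/
lemma exists_line_le {V : Type*} [AddCommGroup V] [Module ℂ V] {X : Submodule ℂ V}
    (hX : 1 ≤ Module.finrank ℂ X) : ∃ L ≤ X, Module.finrank ℂ L = 1 := by
  obtain ⟨x, hxX, hx⟩ := X.exists_mem_ne_zero_of_ne_bot (by rintro rfl; simp at hX)
  exact ⟨ℂ ∙ x, by simpa using hxX, finrank_span_singleton hx⟩

/-- Given pairwise orthogonal subspaces `X₁, X₂, X₃` of dimensions `n₁, n₂, n₃ ≥ 1` of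
a finite-dimensional complex inner product space, there are pairwise orthogonal
subspaces `Y₁, Y₂, Y₃` of the same dimensions with `Y₁ + Y₂ + Y₃ = X₁ + X₂ + X₃`,
such that `Yᵢ` is adjacent to `Xᵢ` for `i = 1, 3`, and `X₁` is not orthogonal to `Y₃`. -/
theorem stmt_15 {V : Type*} [NormedAddCommGroup V] [InnerProductSpace ℂ V]
    [FiniteDimensional ℂ V]
    (X₁ X₂ X₃ : Submodule ℂ V) (n₁ n₂ n₃ : ℕ)
    (hn₁ : 1 ≤ n₁) (hn₂ : 1 ≤ n₂) (hn₃ : 1 ≤ n₃)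
    (hd₁ : Module.finrank ℂ X₁ = n₁) (hd₂ : Module.finrank ℂ X₂ = n₂)
    (hd₃ : Module.finrank ℂ X₃ = n₃)
    (h12 : Submodule.IsOrtho X₁ X₂) (h13 : Submodule.IsOrtho X₁ X₃)
    (h23 : Submodule.IsOrtho X₂ X₃) :
    ∃ Y₁ Y₂ Y₃ : Submodule ℂ V,
      Module.finrank ℂ Y₁ = n₁ ∧ Module.finrank ℂ Y₂ = n₂ ∧
      Module.finrank ℂ Y₃ = n₃ ∧
      Submodule.IsOrtho Y₁ Y₂ ∧ Submodule.IsOrtho Y₁ Y₃ ∧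
      Submodule.IsOrtho Y₂ Y₃ ∧
      Y₁ ⊔ Y₂ ⊔ Y₃ = X₁ ⊔ X₂ ⊔ X₃ ∧
      Module.finrank ℂ ↥(Y₁ ⊓ X₁) + 1 = n₁ ∧
      Module.finrank ℂ ↥(Y₃ ⊓ X₃) + 1 = n₃ ∧
      ¬ Submodule.IsOrtho X₁ Y₃ := by
  subst hd₁ hd₂ hd₃
  obtain ⟨L, hLX, hL⟩ := exists_line_le hn₁
  obtain ⟨M, hMX, hM⟩ := exists_line_le hn₃
  have hM₁ : M ⟂ X₁ := (h13.mono_right hMX).symm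
  have hL₃ : L ⟂ X₃ := h13.mono_left hLX
  have hLc : Lᗮ ⊓ X₁ ⟂ L := (Submodule.isOrtho_orthogonal_left L).mono_left inf_le_left
  have hMc : Mᗮ ⊓ X₃ ⟂ M := (Submodule.isOrtho_orthogonal_left M).mono_left inf_le_left
  refine ⟨Lᗮ ⊓ X₁ ⊔ M, X₂, Mᗮ ⊓ X₃ ⊔ L, finrank_exchange_line hLX hM₁ hL hM, rfl,
    finrank_exchange_line hMX hL₃ hM hL, ?_, ?_, ?_, ?_,
    finrank_exchange_line_inf hLX hM₁ hL, finrank_exchange_line_inf hMX hL₃ hM, ?_⟩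
  · exact Submodule.isOrtho_sup_left.2
      ⟨h12.mono_left inf_le_right, (h23.mono_right hMX).symm⟩
  · exact Submodule.isOrtho_sup_left.2
      ⟨Submodule.isOrtho_sup_right.2 ⟨h13.mono inf_le_right inf_le_right, hLc⟩,
        Submodule.isOrtho_sup_right.2 ⟨hMc.symm, hL₃.symm.mono_left hMX⟩⟩
  · exact Submodule.isOrtho_sup_right.2
      ⟨h23.mono_right inf_le_right, (h12.mono_left hLX).symm⟩
  · calc Lᗮ ⊓ X₁ ⊔ M ⊔ X₂ ⊔ (Mᗮ ⊓ X₃ ⊔ L)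
        = (L ⊔ Lᗮ ⊓ X₁) ⊔ X₂ ⊔ (M ⊔ Mᗮ ⊓ X₃) := by ac_rfl
      _ = X₁ ⊔ X₂ ⊔ X₃ := by
        rw [Submodule.sup_orthogonal_inf_of_hasOrthogonalProjection hLX,
          Submodule.sup_orthogonal_inf_of_hasOrthogonalProjection hMX]
  · intro h
    have hLL : L ⟂ L := h.mono hLX le_sup_right
    rw [Submodule.isOrtho_self.1 hLL, finrank_bot] at hL
    exact zero_ne_one hL
end
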